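/- arXiv:1511.05843 — 3 statements merged into one kernel-verified Lean document; each statement's English description precedes it below -/
import Mathlib

section
/- (Kelly's lemma) Let n and r be positive integers with r < n, let H be a simple graph on the vertex set Fin n, and let G be a finite simple graph without isolated vertices having exactly r vertices. For each vertex v of H, let H − v denote the induced subgraph of H on the remaining n − 1 vertices. Then (n − r) · N_G(H) = Σ_{v ∈ Fin n} N_G(H − v); in particular, the number of occurrences of G in H can be recovered from the numbers of occurrences of G in the vertex-deleted subgraphs of H. -/
/-!
Kelly's lemma is a double count of the pairs `(v, E)` where `E` is a set of edges of `H` spanning a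
copy of `G` and `v` is a vertex of `H` that is not an endpoint of an edge in `E`.

For fixed `E`, the set of endpoints has exactly `r` elements, so there are `n - r` choices of `v`.
For fixed `v`, the sets `E` avoiding `v` correspond to the copies of `G` in `H - v`
(`countCopies_induce`): pushing edge sets forward along the inclusion of a set of vertices does not
change the spanned graph up to isomorphism (`graphOfEdges_image_iso`).
-/

open SimpleGraph

/-- The simple graph determined by a set `E` of edges, whose vertex set is the set of
endpoints of edges in `E` and whose edge set is `E`. -/
def graphOfEdges {β : Type*} (E : Set (Sym2 β)) :
    SimpleGraph (SimpleGraph.fromEdgeSet E).support :=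
  SimpleGraph.induce (SimpleGraph.fromEdgeSet E).support (SimpleGraph.fromEdgeSet E)

/-- `countCopies G H` is the number of sets `E'` of edges of `H` such that the simple graph
whose vertex set is the set of endpoints of edges in `E'` and whose edge set is `E'` is
isomorphic to `G`. -/
noncomputable def countCopies {α β : Type*} (G : SimpleGraph α) (H : SimpleGraph β) : ℕ :=
  Nat.card {E : Finset (Sym2 β) // ↑E ⊆ H.edgeSet ∧
    Nonempty (graphOfEdges (E : Set (Sym2 β)) ≃g G)}

/-- A graph has no isolated vertices: every vertex is incident to at least one edge. -/
def NoIsolated {α : Type*} (G : SimpleGraph α) : Prop := ∀ v, ∃ w, G.Adj v w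

lemma mem_support_fromEdgeSet {β : Type*} {E : Set (Sym2 β)} {a : β} :
    a ∈ (fromEdgeSet E).support ↔ ∃ b, s(a, b) ∈ E ∧ a ≠ b := by
  simp [mem_support]

lemma mk_mem_image_iff {β γ : Type*} {f : β → γ} (hf : Function.Injective f) (E : Set (Sym2 β))
    (a b : β) : s(f a, f b) ∈ Sym2.map f '' E ↔ s(a, b) ∈ E := by
  rw [← Sym2.map_mk, (Sym2.map.injective hf).mem_set_image]

lemma support_fromEdgeSet_image {β γ : Type*} {f : β → γ} (hf : Function.Injective f)
    (E : Set (Sym2 β)) :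
    (fromEdgeSet (Sym2.map f '' E)).support = f '' (fromEdgeSet E).support := by
  ext c
  simp only [mem_support_fromEdgeSet, Set.mem_image]
  constructor
  · rintro ⟨d, ⟨e, he, hed⟩, hne⟩
    induction e with
    | h a b =>
      rw [Sym2.map_mk, Sym2.eq_iff] at hed
      rcases hed with ⟨rfl, rfl⟩ | ⟨rfl, rfl⟩
      · exact ⟨a, ⟨b, he, fun h => hne (h ▸ rfl)⟩, rfl⟩
      · exact ⟨b, ⟨a, Sym2.eq_swap ▸ he, fun h => hne (h ▸ rfl)⟩, rfl⟩
  · rintro ⟨a, ⟨b, he, hne⟩, rfl⟩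
    exact ⟨f b, ⟨s(a, b), he, rfl⟩, fun h => hne (hf h)⟩

lemma graphOfEdges_image_iso {β γ : Type*} {f : β → γ} (hf : Function.Injective f)
    (E : Set (Sym2 β)) : Nonempty (graphOfEdges (Sym2.map f '' E) ≃g graphOfEdges E) := by
  refine ⟨RelIso.symm ⟨(Equiv.Set.image f _ hf).trans
    (Equiv.setCongr (support_fromEdgeSet_image hf E).symm), ?_⟩⟩
  rintro ⟨a, ha⟩ ⟨b, hb⟩
  change (fromEdgeSet (Sym2.map f '' E)).Adj (f a) (f b) ↔ (fromEdgeSet E).Adj a b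
  simp only [fromEdgeSet_adj, mk_mem_image_iff hf, hf.ne_iff]

/-- Copies of `G` in an induced subgraph `H[s]` are the copies of `G` in `H` all of whose vertices
lie in `s`. -/
lemma countCopies_induce {α β : Type*} (G : SimpleGraph α) (H : SimpleGraph β) (s : Set β) :
    countCopies G (H.induce s) = Nat.card {E : Finset (Sym2 β) // (↑E ⊆ H.edgeSet ∧
      Nonempty (graphOfEdges (E : Set (Sym2 β)) ≃g G)) ∧
      (fromEdgeSet (E : Set (Sym2 β))).support ⊆ s} := by
  classical
  have hinj : Function.Injective (Subtype.val : s → β) := Subtype.val_injective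
  let φ : Sym2 s ↪ Sym2 β := ⟨Sym2.map Subtype.val, Sym2.map.injective hinj⟩
  have hφ : ∀ E : Finset (Sym2 s), ((E.map φ : Finset (Sym2 β)) : Set (Sym2 β)) =
      Sym2.map Subtype.val '' (E : Set (Sym2 s)) := fun E => Finset.coe_map φ E
  have hedge : ∀ e : Sym2 s, Sym2.map Subtype.val e ∈ H.edgeSet ↔ e ∈ (H.induce s).edgeSet := by
    intro e
    induction e with
    | h a b => rfl
  have hsub : ∀ E : Finset (Sym2 s),
      ((E.map φ : Finset (Sym2 β)) : Set (Sym2 β)) ⊆ H.edgeSet ↔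
        (E : Set (Sym2 s)) ⊆ (H.induce s).edgeSet := by
    intro E
    rw [hφ, Set.image_subset_iff]
    exact forall₂_congr fun e _ => hedge e
  have hiso : ∀ E : Finset (Sym2 s),
      Nonempty (graphOfEdges ((E.map φ : Finset (Sym2 β)) : Set (Sym2 β)) ≃g G) ↔
        Nonempty (graphOfEdges (E : Set (Sym2 s)) ≃g G) := by
    intro E
    rw [hφ]
    obtain ⟨i⟩ := graphOfEdges_image_iso hinj (E : Set (Sym2 s))
    exact ⟨fun ⟨j⟩ => ⟨i.symm.trans j⟩, fun ⟨j⟩ => ⟨i.trans j⟩⟩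
  refine Nat.card_congr (Equiv.ofBijective (fun E => ⟨E.1.map φ,
    ⟨(hsub _).2 E.2.1, (hiso _).2 E.2.2⟩, ?_⟩) ⟨?_, ?_⟩)
  · rw [hφ, support_fromEdgeSet_image hinj]
    rintro _ ⟨a, -, rfl⟩
    exact a.2
  · intro E F h
    exact Subtype.ext (Finset.map_injective φ (congrArg Subtype.val h))
  · rintro ⟨E, ⟨hEH, hEG⟩, hEs⟩
    have hE : (E.preimage φ φ.injective.injOn).map φ = E := by
      rw [Finset.map_eq_image, Finset.image_preimage, Finset.filter_true_of_mem]
      intro e he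
      induction e with
      | h a b =>
        -- edges of `H` are not loops, so both endpoints lie in the support
        have hne : a ≠ b := (hEH he : H.Adj a b).ne
        have ha : a ∈ s := hEs (mem_support_fromEdgeSet.2 ⟨b, he, hne⟩)
        have hb : b ∈ s :=
          hEs (mem_support_fromEdgeSet.2 ⟨a, Sym2.eq_swap ▸ he, hne.symm⟩)
        exact ⟨s(⟨a, ha⟩, ⟨b, hb⟩), rfl⟩
    refine ⟨⟨E.preimage φ φ.injective.injOn, ?_, ?_⟩, Subtype.ext hE⟩
    · rw [← hsub, hE]
      exact hEH
    · rw [← hiso, hE]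
      exact hEG

/-- Kelly's lemma: for a graph `G` on `r < n` vertices without isolated vertices,
`(n - r) · N_G(H) = Σ_v N_G(H − v)` where `H − v` is the vertex-deleted subgraph. -/
theorem kelly_lemma (n r : ℕ) (hr : 0 < r) (hrn : r < n) (H : SimpleGraph (Fin n))
    {α : Type*} [Fintype α] (G : SimpleGraph α) (hG : NoIsolated G)
    (hcard : Fintype.card α = r) :
    (n - r) * countCopies G H =
      ∑ v : Fin n, countCopies G (SimpleGraph.induce ({v}ᶜ : Set (Fin n)) H) := by
  classical
  let S : Finset (Finset (Sym2 (Fin n))) := Finset.univ.filter fun E =>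
    ↑E ⊆ H.edgeSet ∧ Nonempty (graphOfEdges (E : Set (Sym2 (Fin n))) ≃g G)
  have hS : countCopies G H = S.card := by
    rw [countCopies, Nat.card_eq_fintype_card, Fintype.card_subtype]
  have hv : ∀ v : Fin n, countCopies G (SimpleGraph.induce ({v}ᶜ : Set (Fin n)) H) =
      (S.filter fun E : Finset (Sym2 (Fin n)) =>
        v ∉ (fromEdgeSet (E : Set (Sym2 (Fin n)))).support).card := by
    intro v
    rw [countCopies_induce, Nat.card_eq_fintype_card, Fintype.card_subtype, Finset.filter_filter]
    simp only [Set.subset_compl_singleton_iff]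
  have hE : ∀ E ∈ S, (Finset.univ.filter fun v : Fin n =>
      v ∉ (fromEdgeSet (E : Set (Sym2 (Fin n)))).support).card = n - r := by
    intro E hE
    obtain ⟨-, -, ⟨i⟩⟩ := Finset.mem_filter.1 hE
    have hsupp : Fintype.card (fromEdgeSet (E : Set (Sym2 (Fin n)))).support = r :=
      (Fintype.card_congr i.toEquiv).trans hcard
    rw [← Fintype.card_subtype, Fintype.card_subtype_compl, Fintype.card_fin, ← hsupp]
  simp only [hS, hv]
  refine Eq.trans ?_ (Finset.sum_card_bipartiteAbove_eq_sum_card_bipartiteBelow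
    (s := S) (t := Finset.univ)
    (fun (E : Finset (Sym2 (Fin n))) v => v ∉ (fromEdgeSet (E : Set (Sym2 (Fin n)))).support))
  refine Eq.trans ?_ (Finset.sum_congr rfl hE).symm
  rw [Finset.sum_const, smul_eq_mul, mul_comm]
end

section
/- Let G be a finite simple graph without isolated vertices, and let (G₁⁽¹⁾, G₂⁽¹⁾), …, (G₁⁽ᵐ⁾, G₂⁽ᵐ⁾) be a complete and irredundant list, up to componentwise isomorphism, of ordered pairs of finite simple graphs without isolated vertices whose disjoint union G₁⁽ʲ⁾ ⊔ G₂⁽ʲ⁾ is isomorphic to G (pairs where one entry is the empty graph included). Then for all finite simple graphs H₁ and H₂, N_G(H₁ ⊔ H₂) = Σ_{j=1}^{m} N_{G₁⁽ʲ⁾}(H₁) · N_{G₂⁽ʲ⁾}(H₂). -/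
/-!
An edge of `H₁ ⊕g H₂` is an edge of exactly one of the two summands, so the edge sets `E` of
`H₁ ⊕g H₂` correspond bijectively to pairs `(E₁, E₂)` of edge sets of `H₁` and `H₂`
(`unionEdges`, `exists_unionEdges`, `unionEdges_inj`). Under this correspondence the graph spanned
by `E` is the disjoint union of the graphs spanned by `E₁` and `E₂` (`graphOfEdges_unionEdges`).
Graphs spanned by edge sets have no isolated vertices, so `E` spans a copy of `G` if and only if the
pair of graphs spanned by `(E₁, E₂)` is a decomposition of `G`, that is, isomorphic to exactly one
pair of the list. Hence the copies of `G` in `H₁ ⊕g H₂` are in bijection with triples `(j, E₁, E₂)`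
where `E₁` spans a copy of `G₁ j` and `E₂` a copy of `G₂ j`, and counting both sides gives the sum.
-/

open SimpleGraph

/-- The edge set on `β₁ ⊕ β₂` consisting of `E₁` on the left part and `E₂` on the right part. -/
def unionEdges {β₁ β₂ : Type*} (E₁ : Finset (Sym2 β₁)) (E₂ : Finset (Sym2 β₂)) :
    Finset (Sym2 (β₁ ⊕ β₂)) :=
  (E₁.map ⟨Sym2.map Sum.inl, Sym2.map.injective Sum.inl_injective⟩).disjUnion
    (E₂.map ⟨Sym2.map Sum.inr, Sym2.map.injective Sum.inr_injective⟩) (by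
      rw [Finset.disjoint_left]
      intro e h h'
      simp only [Finset.mem_map, Function.Embedding.coeFn_mk] at h h'
      obtain ⟨a, -, rfl⟩ := h
      obtain ⟨b, -, hb⟩ := h'
      induction a with | _ a a' =>
      induction b with | _ b b' =>
      simp at hb)

section unionEdges

variable {β₁ β₂ : Type*} {E₁ E₁' : Finset (Sym2 β₁)} {E₂ E₂' : Finset (Sym2 β₂)}

lemma inl_inl_mem_unionEdges {a b : β₁} :
    s(Sum.inl a, Sum.inl b) ∈ unionEdges E₁ E₂ ↔ s(a, b) ∈ E₁ := by
  have h := Finset.mem_map' (s := E₁) (a := s(a, b))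
    (⟨Sym2.map (Sum.inl (β := β₂)), Sym2.map.injective Sum.inl_injective⟩ : _ ↪ _)
  simp only [unionEdges, Finset.mem_disjUnion]
  rw [← h]
  simp only [Finset.mem_map, Function.Embedding.coeFn_mk, Sym2.map_mk, or_iff_left_iff_imp]
  rintro ⟨e, -, he⟩
  induction e with | _ c d => simp at he

lemma inr_inr_mem_unionEdges {a b : β₂} :
    s(Sum.inr a, Sum.inr b) ∈ unionEdges E₁ E₂ ↔ s(a, b) ∈ E₂ := by
  have h := Finset.mem_map' (s := E₂) (a := s(a, b))
    (⟨Sym2.map (Sum.inr (α := β₁)), Sym2.map.injective Sum.inr_injective⟩ : _ ↪ _)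
  simp only [unionEdges, Finset.mem_disjUnion]
  rw [← h]
  simp only [Finset.mem_map, Function.Embedding.coeFn_mk, Sym2.map_mk, or_iff_right_iff_imp]
  rintro ⟨e, -, he⟩
  induction e with | _ c d => simp at he

lemma inl_inr_notMem_unionEdges {a : β₁} {b : β₂} :
    s(Sum.inl a, Sum.inr b) ∉ unionEdges E₁ E₂ := by
  simp only [unionEdges, Finset.mem_disjUnion, Finset.mem_map, Function.Embedding.coeFn_mk]
  rintro (⟨e, -, he⟩ | ⟨e, -, he⟩) <;> induction e with | _ c d => simp at he

lemma unionEdges_inj (h : unionEdges E₁ E₂ = unionEdges E₁' E₂') : E₁ = E₁' ∧ E₂ = E₂' := by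
  constructor
  · ext e
    induction e with | _ a b =>
    rw [← inl_inl_mem_unionEdges (E₂ := E₂), h, inl_inl_mem_unionEdges]
  · ext e
    induction e with | _ a b =>
    rw [← inr_inr_mem_unionEdges (E₁ := E₁), h, inr_inr_mem_unionEdges]

lemma unionEdges_subset {H₁ : SimpleGraph β₁} {H₂ : SimpleGraph β₂}
    (h₁ : ↑E₁ ⊆ H₁.edgeSet) (h₂ : ↑E₂ ⊆ H₂.edgeSet) :
    ↑(unionEdges E₁ E₂) ⊆ (H₁ ⊕g H₂).edgeSet := by
  intro e he
  induction e with | _ x y =>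
  rw [Finset.mem_coe] at he
  rcases x with a | a <;> rcases y with b | b
  · simpa using h₁ (inl_inl_mem_unionEdges.1 he)
  · exact (inl_inr_notMem_unionEdges he).elim
  · rw [Sym2.eq_swap] at he
    exact (inl_inr_notMem_unionEdges he).elim
  · simpa using h₂ (inr_inr_mem_unionEdges.1 he)

lemma exists_unionEdges {H₁ : SimpleGraph β₁} {H₂ : SimpleGraph β₂}
    {E : Finset (Sym2 (β₁ ⊕ β₂))} (hE : ↑E ⊆ (H₁ ⊕g H₂).edgeSet) :
    ∃ (E₁ : Finset (Sym2 β₁)) (E₂ : Finset (Sym2 β₂)),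
      ↑E₁ ⊆ H₁.edgeSet ∧ ↑E₂ ⊆ H₂.edgeSet ∧ unionEdges E₁ E₂ = E := by
  classical
  let E₁ := E.preimage (Sym2.map Sum.inl) (Sym2.map.injective Sum.inl_injective).injOn
  let E₂ := E.preimage (Sym2.map Sum.inr) (Sym2.map.injective Sum.inr_injective).injOn
  refine ⟨E₁, E₂, ?_, ?_, ?_⟩
  · intro e he
    induction e with | _ a b =>
    have : s(Sum.inl a, Sum.inl b) ∈ E := by simpa [E₁] using he
    simpa using hE this
  · intro e he
    induction e with | _ a b =>
    have : s(Sum.inr a, Sum.inr b) ∈ E := by simpa [E₂] using he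
    simpa using hE this
  · ext e
    induction e with | _ x y =>
    rcases x with a | a <;> rcases y with b | b
    · rw [inl_inl_mem_unionEdges]; simp [E₁]
    · refine iff_of_false inl_inr_notMem_unionEdges fun h => ?_
      simpa using hE h
    · refine iff_of_false (Sym2.eq_swap ▸ inl_inr_notMem_unionEdges) fun h => ?_
      simpa using hE h
    · rw [inr_inr_mem_unionEdges]; simp [E₂]

lemma fromEdgeSet_unionEdges :
    fromEdgeSet (unionEdges E₁ E₂ : Set (Sym2 (β₁ ⊕ β₂))) =
      fromEdgeSet (E₁ : Set (Sym2 β₁)) ⊕g fromEdgeSet (E₂ : Set (Sym2 β₂)) := by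
  ext x y
  rcases x with a | a <;> rcases y with b | b
  · simp [inl_inl_mem_unionEdges]
  · simp [inl_inr_notMem_unionEdges]
  · rw [fromEdgeSet_adj, Sym2.eq_swap]
    simp [inl_inr_notMem_unionEdges]
  · simp [inr_inr_mem_unionEdges]

end unionEdges

lemma inl_mem_support_sum {β₁ β₂ : Type*} {A : SimpleGraph β₁} {B : SimpleGraph β₂} {a : β₁} :
    Sum.inl a ∈ (A ⊕g B).support ↔ a ∈ A.support := by
  simp [SimpleGraph.mem_support]

lemma inr_mem_support_sum {β₁ β₂ : Type*} {A : SimpleGraph β₁} {B : SimpleGraph β₂} {b : β₂} :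
    Sum.inr b ∈ (A ⊕g B).support ↔ b ∈ B.support := by
  simp [SimpleGraph.mem_support]

/-- Deleting the isolated vertices of a disjoint union amounts to deleting them in each part. -/
def induceSupportSum {β₁ β₂ : Type*} (A : SimpleGraph β₁) (B : SimpleGraph β₂) :
    (A ⊕g B).induce (A ⊕g B).support ≃g A.induce A.support ⊕g B.induce B.support where
  toFun
    | ⟨.inl a, h⟩ => .inl ⟨a, inl_mem_support_sum.1 h⟩
    | ⟨.inr b, h⟩ => .inr ⟨b, inr_mem_support_sum.1 h⟩
  invFun
    | .inl a => ⟨.inl a.1, inl_mem_support_sum.2 a.2⟩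
    | .inr b => ⟨.inr b.1, inr_mem_support_sum.2 b.2⟩
  left_inv := by rintro ⟨_ | _, _⟩ <;> rfl
  right_inv := by rintro (_ | _) <;> rfl
  map_rel_iff' := by rintro ⟨_ | _, _⟩ ⟨_ | _, _⟩ <;> simp

lemma graphOfEdges_unionEdges {β₁ β₂ : Type*} (E₁ : Finset (Sym2 β₁)) (E₂ : Finset (Sym2 β₂)) :
    Nonempty (graphOfEdges (unionEdges E₁ E₂ : Set (Sym2 (β₁ ⊕ β₂))) ≃g
      graphOfEdges (E₁ : Set (Sym2 β₁)) ⊕g graphOfEdges (E₂ : Set (Sym2 β₂))) := by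
  unfold graphOfEdges
  rw [fromEdgeSet_unionEdges]
  exact ⟨induceSupportSum _ _⟩

lemma noIsolated_graphOfEdges {β : Type*} (E : Set (Sym2 β)) : NoIsolated (graphOfEdges E) := by
  rintro ⟨v, hv⟩
  obtain ⟨w, h⟩ := (SimpleGraph.mem_support _).1 hv
  exact ⟨⟨w, (SimpleGraph.mem_support _).2 ⟨v, h.symm⟩⟩, h⟩

lemma NoIsolated.of_iso {α β : Type*} {A : SimpleGraph α} {B : SimpleGraph β}
    (h : NoIsolated A) (e : A ≃g B) : NoIsolated B := by
  intro v
  obtain ⟨w, hw⟩ := h (e.symm v)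
  exact ⟨e w, by simpa using e.map_rel_iff.2 hw⟩

/-- Disjoint unions respect isomorphism in each part. -/
def sumIsoCongr {α α' β β' : Type*} {A : SimpleGraph α} {A' : SimpleGraph α'}
    {B : SimpleGraph β} {B' : SimpleGraph β'} (e : A ≃g A') (f : B ≃g B') :
    A ⊕g B ≃g A' ⊕g B' where
  toEquiv := e.toEquiv.sumCongr f.toEquiv
  map_rel_iff' := by rintro (_ | _) (_ | _) <;> simp [e.map_adj_iff, f.map_adj_iff]

/-- Coproduct formula: if `(G₁⁽ʲ⁾, G₂⁽ʲ⁾)` is a complete and irredundant list, up to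
componentwise isomorphism, of the ordered pairs of graphs without isolated vertices whose
disjoint union is isomorphic to `G`, then
`N_G(H₁ ⊔ H₂) = Σⱼ N_{G₁⁽ʲ⁾}(H₁) · N_{G₂⁽ʲ⁾}(H₂)`. -/
theorem countCopies_sum_graphs {α : Type*} [Fintype α] (G : SimpleGraph α)
    (hG : NoIsolated G)
    (m : ℕ) (k₁ k₂ : Fin m → ℕ)
    (G₁ : ∀ j, SimpleGraph (Fin (k₁ j))) (G₂ : ∀ j, SimpleGraph (Fin (k₂ j)))
    (h₁ : ∀ j, NoIsolated (G₁ j)) (h₂ : ∀ j, NoIsolated (G₂ j))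
    (hdecomp : ∀ j, Nonempty ((G₁ j ⊕g G₂ j) ≃g G))
    (hcomplete : ∀ (γ δ : Type) [Fintype γ] [Fintype δ]
      (A : SimpleGraph γ) (B : SimpleGraph δ), NoIsolated A → NoIsolated B →
      Nonempty ((A ⊕g B) ≃g G) →
      ∃! j, Nonempty (A ≃g G₁ j) ∧ Nonempty (B ≃g G₂ j))
    {β₁ β₂ : Type*} [Fintype β₁] [Fintype β₂]
    (H₁ : SimpleGraph β₁) (H₂ : SimpleGraph β₂) :
    countCopies G (H₁ ⊕g H₂) = ∑ j, countCopies (G₁ j) H₁ * countCopies (G₂ j) H₂ := by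
  classical
  -- `hcomplete` quantifies over vertex types in `Type` only, so the spanned graphs, which live in
  -- the universes of `β₁` and `β₂`, are first transported to `Fin n`.
  have key : ∀ (E₁ : Finset (Sym2 β₁)) (E₂ : Finset (Sym2 β₂)),
      Nonempty (graphOfEdges (unionEdges E₁ E₂ : Set (Sym2 (β₁ ⊕ β₂))) ≃g G) →
      ∃! j, Nonempty (graphOfEdges (E₁ : Set (Sym2 β₁)) ≃g G₁ j) ∧
        Nonempty (graphOfEdges (E₂ : Set (Sym2 β₂)) ≃g G₂ j) := by
    rintro E₁ E₂ ⟨e⟩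
    obtain ⟨u⟩ := graphOfEdges_unionEdges E₁ E₂
    let f₁ := (graphOfEdges (E₁ : Set (Sym2 β₁))).overFinIso rfl
    let f₂ := (graphOfEdges (E₂ : Set (Sym2 β₂))).overFinIso rfl
    obtain ⟨j, ⟨⟨a⟩, ⟨b⟩⟩, hj⟩ := hcomplete _ _ _ _
      ((noIsolated_graphOfEdges _).of_iso f₁) ((noIsolated_graphOfEdges _).of_iso f₂)
      ⟨(sumIsoCongr f₁ f₂).symm.trans (u.symm.trans e)⟩
    exact ⟨j, ⟨⟨f₁.trans a⟩, ⟨f₂.trans b⟩⟩, fun i ⟨⟨a'⟩, ⟨b'⟩⟩ =>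
      hj i ⟨⟨f₁.symm.trans a'⟩, ⟨f₂.symm.trans b'⟩⟩⟩
  have iso : ∀ j (E₁ : Finset (Sym2 β₁)) (E₂ : Finset (Sym2 β₂)),
      Nonempty (graphOfEdges (E₁ : Set (Sym2 β₁)) ≃g G₁ j) →
      Nonempty (graphOfEdges (E₂ : Set (Sym2 β₂)) ≃g G₂ j) →
      Nonempty (graphOfEdges (unionEdges E₁ E₂ : Set (Sym2 (β₁ ⊕ β₂))) ≃g G) := by
    rintro j E₁ E₂ ⟨a⟩ ⟨b⟩
    obtain ⟨u⟩ := graphOfEdges_unionEdges E₁ E₂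
    obtain ⟨d⟩ := hdecomp j
    exact ⟨u.trans ((sumIsoCongr a b).trans d)⟩
  unfold countCopies
  simp_rw [← Nat.card_prod]
  rw [← Nat.card_sigma]
  symm
  refine Nat.card_congr (Equiv.ofBijective (fun p => ⟨unionEdges p.2.1.1 p.2.2.1,
    unionEdges_subset p.2.1.2.1 p.2.2.2.1, iso p.1 _ _ p.2.1.2.2 p.2.2.2.2⟩) ⟨?_, ?_⟩)
  · rintro ⟨i, ⟨E₁, hE₁, a⟩, ⟨E₂, hE₂, b⟩⟩ ⟨j, ⟨F₁, hF₁, c⟩, ⟨F₂, hF₂, d⟩⟩ h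
    obtain ⟨rfl, rfl⟩ := unionEdges_inj (Subtype.ext_iff.1 h)
    obtain rfl := (key E₁ E₂ (iso i E₁ E₂ a b)).unique ⟨a, b⟩ ⟨c, d⟩
    rfl
  · rintro ⟨E, hE, e⟩
    obtain ⟨E₁, E₂, hE₁, hE₂, rfl⟩ := exists_unionEdges hE
    obtain ⟨j, ⟨a, b⟩, -⟩ := key E₁ E₂ e
    exact ⟨⟨j, ⟨E₁, hE₁, a⟩, ⟨E₂, hE₂, b⟩⟩, rfl⟩
end

section
/- Let G₁ and G₂ be connected finite simple graphs, each with at least one edge. Then there exist finitely many connected finite simple graphs K₁, …, K_m and natural numbers c₁, …, c_m such that for every finite simple graph H, N_{G₁}(H) · N_{G₂}(H) = ε · N_{G₁ ⊔ G₂}(H) + Σ_{i=1}^{m} cᵢ · N_{Kᵢ}(H), where ε = 2 if G₁ is isomorphic to G₂ and ε = 1 otherwise; that is, apart from the leading disjoint-union term, the product of the counting functions of two connected graphs is a nonnegative integer combination of counting functions of connected graphs. -/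
/-!
A set of edges of `H` is the same as a spanning subgraph `S ≤ H`, and for `G` without isolated
vertices it spans a graph isomorphic to `G` exactly when `S` is the image `G.map f` of `G` under an
injection `f` of vertex sets (`countCopies_eq_card`). The product `N_{G₁}(H) · N_{G₂}(H)` therefore
counts pairs `(S₁, S₂)` of subgraphs of `H` that are copies of `G₁` and `G₂`. These pairs are
grouped by their union `S = S₁ ⊔ S₂`.

If `S₁` and `S₂` have no common vertex, then `S` is a copy of `G₁ ⊔ G₂`. Conversely such a copy
determines its two connected parts up to order (`eq_or_swap_of_sup_eq`), so it comes from one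
ordered pair, or from two when `G₁ ≅ G₂` (`card_disjoint_fiber`).

If they share a vertex, then `S` is a copy of a connected graph with at most `|G₁| + |G₂|` vertices
(`exists_connected_isCopyOf`). Up to isomorphism there are finitely many such graphs `K`
(`exists_representatives`), and the number of overlapping pairs with union `S` depends only on the
isomorphism type of `S` (`card_overlapPairs_map`). That number is the coefficient of `N_K`.
-/

open SimpleGraph

/-! ### Copies as spanning subgraphs -/

/-- `S` is a copy of `G`: the image of `G` under an injection of vertex sets, possibly with
isolated vertices added. -/
def IsCopyOf {α β : Type*} (G : SimpleGraph α) (S : SimpleGraph β) : Prop :=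
  ∃ f : α ↪ β, G.map f = S

lemma support_map_eq_range {α β : Type*} {G : SimpleGraph α} (hG : NoIsolated G) (f : α ↪ β) :
    (G.map f).support = Set.range f := by
  have hs : G.support = Set.univ := Set.eq_univ_of_forall hG
  rw [support_map, hs, Set.image_univ]

/-- For graphs without isolated vertices, `IsCopyOf` is the isomorphism condition used in
`countCopies`. -/
lemma nonempty_iso_induce_support_iff {α β : Type*} {G : SimpleGraph α} (hG : NoIsolated G)
    (S : SimpleGraph β) : Nonempty (S.induce S.support ≃g G) ↔ IsCopyOf G S := by
  constructor
  · rintro ⟨e⟩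
    refine ⟨e.symm.toEquiv.toEmbedding.trans (Function.Embedding.subtype _), ?_⟩
    ext u v
    simp only [map_adj]
    constructor
    · rintro ⟨a, b, hab, rfl, rfl⟩
      exact e.symm.map_rel_iff.2 hab
    · intro h
      refine ⟨e ⟨u, v, h⟩, e ⟨v, u, h.symm⟩, e.map_rel_iff.2 h, ?_, ?_⟩
      · exact congrArg Subtype.val (e.symm_apply_apply _)
      · exact congrArg Subtype.val (e.symm_apply_apply _)
  · rintro ⟨f, rfl⟩
    have hs := support_map_eq_range hG f
    refine ⟨RelIso.symm ⟨(Equiv.ofInjective f f.injective).trans (Equiv.setCongr hs.symm), ?_⟩⟩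
    intro a b
    exact map_adj_apply

/-- The copies of `G` inside `H`, as spanning subgraphs of `H`. -/
noncomputable def copiesIn {α β : Type*} [Finite β] (G : SimpleGraph α) (H : SimpleGraph β) :
    Finset (SimpleGraph β) :=
  (Set.toFinite {S : SimpleGraph β | S ≤ H ∧ IsCopyOf G S}).toFinset

lemma mem_copiesIn {α β : Type*} [Finite β] {G : SimpleGraph α} {H S : SimpleGraph β} :
    S ∈ copiesIn G H ↔ S ≤ H ∧ IsCopyOf G S := by
  simp [copiesIn]

/-- Sets of edges of `H` correspond to spanning subgraphs of `H` through `fromEdgeSet`. -/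
lemma countCopies_eq_card {α β : Type*} [Finite β] {G : SimpleGraph α} (hG : NoIsolated G)
    (H : SimpleGraph β) : countCopies G H = (copiesIn G H).card := by
  rw [countCopies, ← Nat.card_eq_finsetCard]
  -- Loops, which `fromEdgeSet` would discard, are excluded by `E ⊆ H.edgeSet`.
  have hedge : ∀ E : Finset (Sym2 β), (E : Set (Sym2 β)) ⊆ H.edgeSet →
      (fromEdgeSet (E : Set (Sym2 β))).edgeSet = E := by
    intro E hE
    rw [edgeSet_fromEdgeSet, sdiff_eq_left, ← Set.subset_compl_iff_disjoint_right]
    exact fun e he => H.not_isDiag_of_mem_edgeSet (hE he)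
  refine Nat.card_congr (Equiv.ofBijective (fun E => ⟨fromEdgeSet (E.1 : Set (Sym2 β)), ?_⟩)
    ⟨?_, ?_⟩)
  · refine mem_copiesIn.2 ⟨?_, (nonempty_iso_induce_support_iff hG _).1 E.2.2⟩
    rw [← edgeSet_subset_edgeSet, hedge _ E.2.1]
    exact E.2.1
  · intro E F h
    have h' := congrArg edgeSet (congrArg Subtype.val h)
    simp only [hedge _ E.2.1, hedge _ F.2.1] at h'
    exact Subtype.ext (Finset.coe_injective h')
  · rintro ⟨S, hS⟩
    obtain ⟨hle, hc⟩ := mem_copiesIn.1 hS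
    have hcoe : ((Set.toFinite S.edgeSet).toFinset : Set (Sym2 β)) = S.edgeSet :=
      Set.Finite.coe_toFinset _
    refine ⟨⟨(Set.toFinite S.edgeSet).toFinset, ?_, ?_⟩, ?_⟩
    · rw [hcoe]
      exact edgeSet_subset_edgeSet.2 hle
    · apply (nonempty_iso_induce_support_iff hG _).2
      rw [hcoe, fromEdgeSet_edgeSet]
      exact hc
    · apply Subtype.ext
      simp only [hcoe, fromEdgeSet_edgeSet]

/-! ### Overlapping pairs with a given union -/

/-- Pairs of overlapping copies of `G₁` and `G₂` whose union is `T`. -/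
noncomputable def overlapPairs {α₁ α₂ β : Type*} [Finite β] (G₁ : SimpleGraph α₁)
    (G₂ : SimpleGraph α₂) (T : SimpleGraph β) : Finset (SimpleGraph β × SimpleGraph β) :=
  (Set.toFinite {p : SimpleGraph β × SimpleGraph β | p.1 ⊔ p.2 = T ∧ IsCopyOf G₁ p.1 ∧
    IsCopyOf G₂ p.2 ∧ ¬ Disjoint p.1.support p.2.support}).toFinset

lemma mem_overlapPairs {α₁ α₂ β : Type*} [Finite β] {G₁ : SimpleGraph α₁}
    {G₂ : SimpleGraph α₂} {T : SimpleGraph β} {p : SimpleGraph β × SimpleGraph β} :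
    p ∈ overlapPairs G₁ G₂ T ↔ p.1 ⊔ p.2 = T ∧ IsCopyOf G₁ p.1 ∧
    IsCopyOf G₂ p.2 ∧ ¬ Disjoint p.1.support p.2.support := by
  simp [overlapPairs]

lemma map_sup_map {α β : Type*} (f : α ↪ β) (A B : SimpleGraph α) :
    (A ⊔ B).map f = A.map f ⊔ B.map f := by
  ext u v
  simp only [map_adj, sup_adj]
  grind

lemma isCopyOf_map_iff {α γ β : Type*} {G : SimpleGraph α} (hG : NoIsolated G) (f : γ ↪ β)
    (A : SimpleGraph γ) : IsCopyOf G (A.map f) ↔ IsCopyOf G A := by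
  constructor
  · rintro ⟨g, hg⟩
    have hr : ∀ a, ∃ c, f c = g a := by
      intro a
      have : g a ∈ (A.map f).support := by
        rw [← hg, support_map_eq_range hG]; exact ⟨a, rfl⟩
      rw [support_map] at this
      exact this.imp fun _ h => h.2
    choose g' hg' using hr
    refine ⟨⟨g', fun a b h => g.injective (by rw [← hg', ← hg', h])⟩, ?_⟩
    apply map_injective f
    rw [← hg, map_map]
    congr 1
    exact funext hg'
  · rintro ⟨g, rfl⟩
    exact ⟨g.trans f, (map_map G g f).symm⟩

lemma exists_map_eq_of_le_map {γ β : Type*} (f : γ ↪ β) {K : SimpleGraph γ} {S : SimpleGraph β}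
    (h : S ≤ K.map f) : ∃ A : SimpleGraph γ, A.map f = S := by
  refine ⟨S.comap f, ?_⟩
  ext u v
  simp only [map_adj, comap_adj]
  constructor
  · rintro ⟨a, b, hab, rfl, rfl⟩
    exact hab
  · intro huv
    obtain ⟨a, b, -, rfl, rfl⟩ := (map_adj _ _ _ _).1 (h huv)
    exact ⟨a, b, huv, rfl, rfl⟩

/-- The number of ways to write a graph as an overlapping union of copies of `G₁` and `G₂` is
unchanged when the graph is moved along an injection. It is therefore the same for every copy of
`K`, and serves as the coefficient of `N_K`. -/
lemma card_overlapPairs_map {α₁ α₂ γ β : Type*} [Finite γ] [Finite β] {G₁ : SimpleGraph α₁}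
    {G₂ : SimpleGraph α₂} (h₁ : NoIsolated G₁) (h₂ : NoIsolated G₂) (K : SimpleGraph γ)
    (f : γ ↪ β) :
    (overlapPairs G₁ G₂ (K.map f)).card = (overlapPairs G₁ G₂ K).card := by
  symm
  have hd : ∀ A B : SimpleGraph γ, Disjoint (A.map f).support (B.map f).support ↔
      Disjoint A.support B.support := by
    intro A B
    rw [support_map, support_map, Set.disjoint_image_iff f.injective]
  have hinj := map_injective f
  refine Finset.card_bij (fun p _ => (p.1.map f, p.2.map f)) ?_ ?_ ?_
  · intro p hp
    simp only [mem_overlapPairs, isCopyOf_map_iff h₁, isCopyOf_map_iff h₂, hd] at hp ⊢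
    exact ⟨by rw [← map_sup_map, hp.1], hp.2⟩
  · intro p _ q _ h
    exact Prod.ext (hinj (congrArg Prod.fst h)) (hinj (congrArg Prod.snd h))
  · rintro ⟨S, T⟩ hp
    rw [mem_overlapPairs] at hp
    obtain ⟨A, rfl⟩ := exists_map_eq_of_le_map f (le_sup_left.trans hp.1.le)
    obtain ⟨B, rfl⟩ := exists_map_eq_of_le_map f (le_sup_right.trans hp.1.le)
    simp only [isCopyOf_map_iff h₁, isCopyOf_map_iff h₂, hd, ← map_sup_map] at hp
    exact ⟨(A, B), mem_overlapPairs.2 ⟨hinj hp.1, hp.2⟩, rfl⟩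

/-! ### Disjoint unions -/

/-- A copy of a connected graph inside a disjoint union lies in one of the two parts. -/
lemma le_or_le_of_le_sup {α β : Type*} {G : SimpleGraph α} (hc : G.Connected)
    {S T₁ T₂ : SimpleGraph β} (hS : IsCopyOf G S) (hle : S ≤ T₁ ⊔ T₂)
    (hd : Disjoint T₁.support T₂.support) : S ≤ T₁ ∨ S ≤ T₂ := by
  obtain ⟨f, rfl⟩ := hS
  rw [Set.disjoint_left] at hd
  have step : ∀ a b, G.Adj a b → (f a ∈ T₁.support ↔ f b ∈ T₁.support) := by
    intro a b hab
    rcases hle (map_adj_apply.2 hab) with h | h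
    · exact ⟨fun _ => ⟨_, h.symm⟩, fun _ => ⟨_, h⟩⟩
    · exact ⟨fun h' => (hd h' ⟨_, h⟩).elim, fun h' => (hd h' ⟨_, h.symm⟩).elim⟩
  have const : ∀ a b, f a ∈ T₁.support ↔ f b ∈ T₁.support := by
    intro a b
    obtain ⟨w⟩ := hc.preconnected a b
    induction w with
    | nil => rfl
    | cons h _ ih => exact (step _ _ h).trans ih
  obtain ⟨a₀⟩ := hc.nonempty
  by_cases h₀ : f a₀ ∈ T₁.support
  · left
    intro u v huv
    rcases hle huv with h | h
    · exact h
    · obtain ⟨a, b, -, rfl, rfl⟩ := (map_adj _ _ _ _).1 huv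
      exact (hd ((const a₀ a).1 h₀) ⟨_, h⟩).elim
  · right
    intro u v huv
    rcases hle huv with h | h
    · obtain ⟨a, b, -, rfl, rfl⟩ := (map_adj _ _ _ _).1 huv
      exact (h₀ ((const a₀ a).2 ⟨_, h⟩)).elim
    · exact h

lemma noIsolated_of_connected {α : Type*} {G : SimpleGraph α} (hc : G.Connected)
    (he : G.edgeSet.Nonempty) : NoIsolated G := by
  obtain ⟨e, he⟩ := he
  induction e with
  | _ a b =>
    have : Nontrivial α := ⟨a, b, G.ne_of_adj he⟩
    exact fun v => hc.preconnected.exists_adj_of_nontrivial v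

lemma noIsolated_sum {α₁ α₂ : Type*} {G₁ : SimpleGraph α₁} {G₂ : SimpleGraph α₂}
    (h₁ : NoIsolated G₁) (h₂ : NoIsolated G₂) : NoIsolated (G₁ ⊕g G₂) := by
  rintro (v | v)
  · obtain ⟨w, hw⟩ := h₁ v
    exact ⟨.inl w, hw⟩
  · obtain ⟨w, hw⟩ := h₂ v
    exact ⟨.inr w, hw⟩

lemma sum_map {α₁ α₂ β : Type*} (G₁ : SimpleGraph α₁) (G₂ : SimpleGraph α₂) (f : α₁ ⊕ α₂ ↪ β) :
    (G₁ ⊕g G₂).map f = G₁.map (Function.Embedding.inl.trans f) ⊔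
      G₂.map (Function.Embedding.inr.trans f) := by
  ext u v
  simp only [map_adj, sup_adj]
  constructor
  · rintro ⟨a | a, b | b, hab, rfl, rfl⟩
    · exact .inl ⟨a, b, hab, rfl, rfl⟩
    · simp at hab
    · simp at hab
    · exact .inr ⟨a, b, hab, rfl, rfl⟩
  · rintro (⟨a, b, hab, rfl, rfl⟩ | ⟨a, b, hab, rfl, rfl⟩)
    · exact ⟨.inl a, .inl b, hab, rfl, rfl⟩
    · exact ⟨.inr a, .inr b, hab, rfl, rfl⟩

/-- Copies of `G₁ ⊔ G₂` are the unions of vertex-disjoint copies of `G₁` and `G₂`. -/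
lemma isCopyOf_sum_iff {α₁ α₂ β : Type*} {G₁ : SimpleGraph α₁} {G₂ : SimpleGraph α₂}
    (h₁ : NoIsolated G₁) (h₂ : NoIsolated G₂) (S : SimpleGraph β) :
    IsCopyOf (G₁ ⊕g G₂) S ↔ ∃ T₁ T₂, T₁ ⊔ T₂ = S ∧ IsCopyOf G₁ T₁ ∧ IsCopyOf G₂ T₂ ∧
      Disjoint T₁.support T₂.support := by
  constructor
  · rintro ⟨f, rfl⟩
    refine ⟨_, _, (sum_map G₁ G₂ f).symm, ⟨_, rfl⟩, ⟨_, rfl⟩, ?_⟩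
    rw [support_map_eq_range h₁, support_map_eq_range h₂, Set.disjoint_left]
    rintro _ ⟨a, rfl⟩ ⟨b, hb⟩
    simp at hb
  · rintro ⟨_, _, rfl, ⟨f, rfl⟩, ⟨g, rfl⟩, hd⟩
    rw [support_map_eq_range h₁, support_map_eq_range h₂, Set.disjoint_left] at hd
    refine ⟨⟨Sum.elim f g, f.injective.sumElim g.injective
      fun a b h => hd ⟨a, rfl⟩ ⟨b, h.symm⟩⟩, ?_⟩
    rw [sum_map]
    rfl

lemma IsCopyOf.nonempty_iso {α₁ α₂ β : Type*} {G₁ : SimpleGraph α₁} {G₂ : SimpleGraph α₂}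
    (h₁ : NoIsolated G₁) (h₂ : NoIsolated G₂) {S : SimpleGraph β} (c₁ : IsCopyOf G₁ S)
    (c₂ : IsCopyOf G₂ S) : Nonempty (G₁ ≃g G₂) := by
  obtain ⟨e₁⟩ := (nonempty_iso_induce_support_iff h₁ S).2 c₁
  obtain ⟨e₂⟩ := (nonempty_iso_induce_support_iff h₂ S).2 c₂
  exact ⟨e₁.symm.trans e₂⟩

lemma IsCopyOf.of_iso {α₁ α₂ β : Type*} {G₁ : SimpleGraph α₁} {G₂ : SimpleGraph α₂}
    (h₁ : NoIsolated G₁) (h₂ : NoIsolated G₂) {S : SimpleGraph β} (c₁ : IsCopyOf G₁ S)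
    (e : G₁ ≃g G₂) : IsCopyOf G₂ S := by
  obtain ⟨e₁⟩ := (nonempty_iso_induce_support_iff h₁ S).2 c₁
  exact (nonempty_iso_induce_support_iff h₂ S).1 ⟨e₁.trans e⟩

lemma IsCopyOf.support_nonempty {α β : Type*} {G : SimpleGraph α} (h : NoIsolated G) [Nonempty α]
    {S : SimpleGraph β} (c : IsCopyOf G S) : S.support.Nonempty := by
  obtain ⟨f, rfl⟩ := c
  rw [support_map_eq_range h]
  exact Set.range_nonempty f

lemma eq_of_le_of_sup_eq {β : Type*} {S₁ S₂ T₁ T₂ : SimpleGraph β} (h₁ : S₁ ≤ T₁) (h₂ : S₂ ≤ T₂)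
    (hs : S₁ ⊔ S₂ = T₁ ⊔ T₂) (hd : Disjoint T₁.support T₂.support) : S₁ = T₁ ∧ S₂ = T₂ := by
  rw [Set.disjoint_left] at hd
  refine ⟨le_antisymm h₁ fun u v h => ?_, le_antisymm h₂ fun u v h => ?_⟩
  · have : (S₁ ⊔ S₂).Adj u v := by rw [hs]; exact .inl h
    exact this.resolve_right fun h' => hd ⟨_, h⟩ ⟨_, h₂ h'⟩
  · have : (S₁ ⊔ S₂).Adj u v := by rw [hs]; exact .inr h
    exact this.resolve_left fun h' => hd ⟨_, h₁ h'⟩ ⟨_, h⟩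

/-- If the union of copies of two connected graphs is also the union of two vertex-disjoint
graphs with edges, then the two decompositions agree up to order. -/
lemma eq_or_swap_of_sup_eq {α₁ α₂ β : Type*} {G₁ : SimpleGraph α₁} {G₂ : SimpleGraph α₂}
    (h₁c : G₁.Connected) (h₂c : G₂.Connected)
    {S₁ S₂ T₁ T₂ : SimpleGraph β} (hS₁ : IsCopyOf G₁ S₁) (hS₂ : IsCopyOf G₂ S₂)
    (hT₁ : T₁.support.Nonempty) (hT₂ : T₂.support.Nonempty)
    (hs : S₁ ⊔ S₂ = T₁ ⊔ T₂) (hT : Disjoint T₁.support T₂.support) :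
    (S₁ = T₁ ∧ S₂ = T₂) ∨ (S₁ = T₂ ∧ S₂ = T₁) := by
  rcases le_or_le_of_le_sup h₁c hS₁ (le_sup_left.trans hs.le) hT with a | a <;>
    rcases le_or_le_of_le_sup h₂c hS₂ (le_sup_right.trans hs.le) hT with b | b
  · obtain ⟨v, w, hv⟩ := hT₂
    exact (Set.disjoint_left.1 hT ⟨w, sup_le a b (hs.ge (.inr hv))⟩ ⟨w, hv⟩).elim
  · exact .inl (eq_of_le_of_sup_eq a b hs hT)
  · exact .inr (eq_of_le_of_sup_eq a b (hs.trans (sup_comm _ _)) hT.symm)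
  · obtain ⟨v, w, hv⟩ := hT₁
    exact (Set.disjoint_left.1 hT ⟨w, hv⟩ ⟨w, sup_le a b (hs.ge (.inl hv))⟩).elim

/-- Each copy of `G₁ ⊔ G₂` is the union of exactly `ε` ordered pairs of vertex-disjoint copies of
`G₁` and `G₂`: the pair of its two parts, and the swapped pair when `G₁ ≅ G₂`. -/
lemma card_disjoint_fiber {α₁ α₂ β : Type*} [Finite β]
    {G₁ : SimpleGraph α₁} {G₂ : SimpleGraph α₂} (h₁ : NoIsolated G₁) (h₂ : NoIsolated G₂)
    (h₁c : G₁.Connected) (h₂c : G₂.Connected) [Decidable (Nonempty (G₁ ≃g G₂))]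
    {S : SimpleGraph β} (hS : IsCopyOf (G₁ ⊕g G₂) S)
    (P : Finset (SimpleGraph β × SimpleGraph β))
    (hP : ∀ p, p ∈ P ↔ p.1 ⊔ p.2 = S ∧ IsCopyOf G₁ p.1 ∧ IsCopyOf G₂ p.2 ∧
      Disjoint p.1.support p.2.support) :
    P.card = if Nonempty (G₁ ≃g G₂) then 2 else 1 := by
  classical
  obtain ⟨T₁, T₂, rfl, c₁, c₂, hd⟩ := (isCopyOf_sum_iff h₁ h₂ S).1 hS
  have := h₁c.nonempty
  have := h₂c.nonempty
  have n₁ := c₁.support_nonempty h₁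
  have n₂ := c₂.support_nonempty h₂
  have hne : T₁ ≠ T₂ := by
    rintro rfl
    exact n₁.ne_empty (disjoint_self.1 hd)
  have key : ∀ p ∈ P, p = (T₁, T₂) ∨ p = (T₂, T₁) := by
    rintro ⟨S₁, S₂⟩ hp
    obtain ⟨hs, d₁, d₂, -⟩ := (hP _).1 hp
    simpa using eq_or_swap_of_sup_eq h₁c h₂c d₁ d₂ n₁ n₂ hs hd
  have hmem : (T₁, T₂) ∈ P := (hP _).2 ⟨rfl, c₁, c₂, hd⟩
  split_ifs with hiso
  · obtain ⟨e⟩ := hiso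
    have hmem' : (T₂, T₁) ∈ P :=
      (hP _).2 ⟨sup_comm _ _, c₂.of_iso h₂ h₁ e.symm, c₁.of_iso h₁ h₂ e, hd.symm⟩
    have : P = {(T₁, T₂), (T₂, T₁)} := by
      ext p
      simp only [Finset.mem_insert, Finset.mem_singleton]
      exact ⟨key p, by rintro (rfl | rfl) <;> assumption⟩
    rw [this, Finset.card_pair]
    simp [hne]
  · rw [Finset.card_eq_one]
    refine ⟨(T₁, T₂), ?_⟩
    ext p
    rw [Finset.mem_singleton]
    refine ⟨fun hp => (key p hp).resolve_right ?_, by rintro rfl; exact hmem⟩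
    rintro rfl
    exact hiso (((hP _).1 hp).2.1.nonempty_iso h₁ h₂ c₂)

/-! ### Connected unions -/

/-- If copies of two connected graphs share a vertex, then their union is a copy of a connected
graph. The vertex bound leaves only finitely many possibilities, independently of `β`. -/
lemma exists_connected_isCopyOf {α₁ α₂ β : Type*} [Fintype α₁] [Fintype α₂] [Finite β]
    {G₁ : SimpleGraph α₁}
    {G₂ : SimpleGraph α₂} (h₁ : NoIsolated G₁) (h₂ : NoIsolated G₂) (h₁c : G₁.Connected)
    (h₂c : G₂.Connected) {S₁ S₂ : SimpleGraph β} (hS₁ : IsCopyOf G₁ S₁) (hS₂ : IsCopyOf G₂ S₂)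
    (hd : ¬ Disjoint S₁.support S₂.support) :
    ∃ n ≤ Fintype.card α₁ + Fintype.card α₂, ∃ K : SimpleGraph (Fin n), K.Connected ∧
      NoIsolated K ∧ IsCopyOf K (S₁ ⊔ S₂) := by
  obtain ⟨f, rfl⟩ := hS₁
  obtain ⟨g, rfl⟩ := hS₂
  rw [support_map_eq_range h₁, support_map_eq_range h₂, Set.not_disjoint_iff] at hd
  obtain ⟨_, ⟨a₀, rfl⟩, ⟨b₀, hb₀⟩⟩ := hd
  set S := G₁.map f ⊔ G₂.map g with hS
  have hf : ∀ {a b}, G₁.Adj a b → S.Adj (f a) (f b) := fun h => .inl (map_adj_apply.2 h)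
  have hg : ∀ {a b}, G₂.Adj a b → S.Adj (g a) (g b) := fun h => .inr (map_adj_apply.2 h)
  have hfs : ∀ a, f a ∈ S.support := fun a => (h₁ a).elim fun b h => ⟨_, hf h⟩
  have hgs : ∀ a, g a ∈ S.support := fun a => (h₂ a).elim fun b h => ⟨_, hg h⟩
  have hsupp : ∀ x ∈ S.support, (∃ a, f a = x) ∨ ∃ b, g b = x := by
    rintro x ⟨y, h | h⟩
    · obtain ⟨a, -, -, rfl, -⟩ := (map_adj _ _ _ _).1 h
      exact .inl ⟨a, rfl⟩
    · obtain ⟨a, -, -, rfl, -⟩ := (map_adj _ _ _ _).1 h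
      exact .inr ⟨a, rfl⟩
  let φ : G₁ →g S.induce S.support := ⟨fun a => ⟨f a, hfs a⟩, fun h => hf h⟩
  let ψ : G₂ →g S.induce S.support := ⟨fun a => ⟨g a, hgs a⟩, fun h => hg h⟩
  have hφψ : ψ b₀ = φ a₀ := Subtype.ext hb₀
  have reach : ∀ x, (S.induce S.support).Reachable (φ a₀) x := by
    rintro ⟨x, hx⟩
    rcases hsupp x hx with ⟨a, rfl⟩ | ⟨b, rfl⟩
    · exact (h₁c.preconnected a₀ a).map φ
    · rw [← hφψ]
      exact (h₂c.preconnected b₀ b).map ψ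
  have hconn : (S.induce S.support).Connected :=
    (connected_iff_exists_forall_reachable _).2 ⟨φ a₀, reach⟩
  have hiso : NoIsolated (S.induce S.support) := by
    rintro ⟨x, y, h⟩
    exact ⟨⟨y, x, S.adj_symm h⟩, h⟩
  let e := Finite.equivFin S.support
  let E : S.induce S.support ≃g (S.induce S.support).map e.toEmbedding :=
    SimpleGraph.Iso.map e _
  have hKiso : NoIsolated ((S.induce S.support).map e.toEmbedding) := by
    intro v
    obtain ⟨w, hw⟩ := hiso (E.symm v)
    have h := E.map_rel_iff.2 hw
    rw [RelIso.apply_symm_apply] at h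
    exact ⟨E w, h⟩
  refine ⟨_, ?_, (S.induce S.support).map e.toEmbedding, E.connected_iff.1 hconn, hKiso,
    (nonempty_iso_induce_support_iff hKiso S).1 ⟨E⟩⟩
  have hsurj : Function.Surjective (Sum.elim φ ψ : α₁ ⊕ α₂ → S.support) := by
    rintro ⟨x, hx⟩
    rcases hsupp x hx with ⟨a, rfl⟩ | ⟨b, rfl⟩
    · exact ⟨.inl a, rfl⟩
    · exact ⟨.inr b, rfl⟩
  simpa using Nat.card_le_card_of_surjective _ hsurj

/-- There is a finite list, without repetition up to isomorphism, of the connected graphs without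
isolated vertices on at most `N` vertices. -/
lemma exists_representatives (N : ℕ) :
    ∃ (m : ℕ) (k : Fin m → ℕ) (K : ∀ i, SimpleGraph (Fin (k i))),
      (∀ i, (K i).Connected) ∧ (∀ i, NoIsolated (K i)) ∧
      (∀ i j, Nonempty (K i ≃g K j) → i = j) ∧
      ∀ n ≤ N, ∀ L : SimpleGraph (Fin n), L.Connected → NoIsolated L →
        ∃ i, Nonempty (L ≃g K i) := by
  let X := {x : Σ n : Fin (N + 1), SimpleGraph (Fin n) // x.2.Connected ∧ NoIsolated x.2}
  let s : Setoid X :=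
    { r := fun x y => Nonempty (x.1.2 ≃g y.1.2)
      iseqv := ⟨fun _ => ⟨RelIso.refl _⟩, fun ⟨e⟩ => ⟨e.symm⟩, fun ⟨e⟩ ⟨e'⟩ => ⟨e.trans e'⟩⟩ }
  let e := (Finite.equivFin (Quotient s)).symm
  refine ⟨_, fun i => ((e i).out.1.1 : ℕ), fun i => (e i).out.1.2, fun i => (e i).out.2.1,
    fun i => (e i).out.2.2, ?_, ?_⟩
  · intro i j h
    have : (e i).out ≈ (e j).out := h
    exact e.injective (Quotient.out_equiv_out.1 this)
  · intro n hn L hc hi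
    let x : X := ⟨⟨⟨n, Nat.lt_succ_of_le hn⟩, L⟩, hc, hi⟩
    have hx : ∀ q : Quotient s, q = ⟦x⟧ → Nonempty (L ≃g q.out.1.2) := by
      rintro _ rfl
      exact Setoid.symm (Quotient.mk_out x)
    exact ⟨e.symm ⟦x⟧, hx _ (e.apply_symm_apply _)⟩

/-! ### The product formula -/

/-- For connected graphs `G₁`, `G₂`, each with at least one edge, the product of their
counting functions is `ε · N_{G₁ ⊔ G₂}` (with `ε = 2` if `G₁ ≅ G₂` and `ε = 1` otherwise)
plus a nonnegative integer combination of counting functions of connected graphs. -/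
theorem countCopies_mul_countCopies_connected {α₁ α₂ : Type*} [Fintype α₁] [Fintype α₂]
    (G₁ : SimpleGraph α₁) (G₂ : SimpleGraph α₂)
    (h₁c : G₁.Connected) (h₂c : G₂.Connected)
    (h₁e : G₁.edgeSet.Nonempty) (h₂e : G₂.edgeSet.Nonempty)
    [Decidable (Nonempty (G₁ ≃g G₂))] :
    ∃ (m : ℕ) (k : Fin m → ℕ) (K : ∀ i, SimpleGraph (Fin (k i))) (c : Fin m → ℕ),
      (∀ i, (K i).Connected) ∧
      ∀ (β : Type*) [Fintype β] (H : SimpleGraph β),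
        countCopies G₁ H * countCopies G₂ H =
          (if Nonempty (G₁ ≃g G₂) then 2 else 1) * countCopies (G₁ ⊕g G₂) H +
          ∑ i, c i * countCopies (K i) H := by
  have h₁ := noIsolated_of_connected h₁c h₁e
  have h₂ := noIsolated_of_connected h₂c h₂e
  obtain ⟨m, k, K, hKc, hKi, hKinj, hKex⟩ :=
    exists_representatives (Fintype.card α₁ + Fintype.card α₂)
  refine ⟨m, k, K, fun i => (overlapPairs G₁ G₂ (K i)).card, hKc, ?_⟩
  intro β _ H
  classical
  simp only [countCopies_eq_card h₁, countCopies_eq_card h₂, countCopies_eq_card (hKi _),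
    countCopies_eq_card (noIsolated_sum h₁ h₂)]
  rw [← Finset.card_product, ← Finset.card_filter_add_card_filter_not
    (fun p : SimpleGraph β × SimpleGraph β => Disjoint p.1.support p.2.support)]
  congr 1
  -- Vertex-disjoint pairs, grouped by their union, a copy of `G₁ ⊔ G₂`.
  · rw [Finset.card_eq_sum_card_fiberwise (f := fun p => p.1 ⊔ p.2) (t := copiesIn (G₁ ⊕g G₂) H),
      Finset.sum_congr rfl (g := fun _ => if Nonempty (G₁ ≃g G₂) then 2 else 1),
      Finset.sum_const, smul_eq_mul, mul_comm]
    · intro S hS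
      obtain ⟨hle, hS⟩ := mem_copiesIn.1 hS
      refine card_disjoint_fiber h₁ h₂ h₁c h₂c hS _ fun p => ?_
      simp only [Finset.mem_filter, Finset.mem_product, mem_copiesIn]
      constructor
      · tauto
      · rintro ⟨rfl, c₁, c₂, hd⟩
        exact ⟨⟨⟨⟨le_sup_left.trans hle, c₁⟩, le_sup_right.trans hle, c₂⟩, hd⟩, rfl⟩
    · intro p hp
      simp only [Finset.coe_filter, Set.mem_ofPred_eq, Finset.mem_product, mem_copiesIn] at hp
      exact mem_copiesIn.2 ⟨sup_le hp.1.1.1 hp.1.2.1,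
        (isCopyOf_sum_iff h₁ h₂ _).2 ⟨_, _, rfl, hp.1.1.2, hp.1.2.2, hp.2⟩⟩
  -- Overlapping pairs, grouped by their union, a copy of at most one of the `K i`.
  · have hfin := Fintype.ofFinite (SimpleGraph β)
    rw [Finset.card_eq_sum_card_fiberwise (f := fun p => p.1 ⊔ p.2)
      (t := Finset.univ.filter (· ≤ H))]
    · have hfib : ∀ S ∈ Finset.univ.filter (· ≤ H),
          (((copiesIn G₁ H ×ˢ copiesIn G₂ H).filter
            (fun p => ¬ Disjoint p.1.support p.2.support)).filter (fun p => p.1 ⊔ p.2 = S)).card =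
          ∑ i, if IsCopyOf (K i) S then (overlapPairs G₁ G₂ (K i)).card else 0 := by
        intro S hS
        rw [Finset.mem_filter] at hS
        have hset : ((copiesIn G₁ H ×ˢ copiesIn G₂ H).filter
            (fun p => ¬ Disjoint p.1.support p.2.support)).filter (fun p => p.1 ⊔ p.2 = S) =
            overlapPairs G₁ G₂ S := by
          ext p
          simp only [Finset.mem_filter, Finset.mem_product, mem_copiesIn, mem_overlapPairs]
          constructor
          · tauto
          · rintro ⟨rfl, c₁, c₂, hd⟩
            exact ⟨⟨⟨⟨le_sup_left.trans hS.2, c₁⟩, le_sup_right.trans hS.2, c₂⟩, hd⟩, rfl⟩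
        rw [hset]
        have hcopy : ∀ i, IsCopyOf (K i) S →
            (overlapPairs G₁ G₂ (K i)).card = (overlapPairs G₁ G₂ S).card := by
          rintro i ⟨f, rfl⟩
          exact (card_overlapPairs_map h₁ h₂ _ f).symm
        -- If `S` is a copy of no `K i`, then it has no overlapping decomposition at all.
        by_cases hex : ∃ i, IsCopyOf (K i) S
        · obtain ⟨i, hi⟩ := hex
          rw [Finset.sum_eq_single i, if_pos hi, hcopy i hi]
          · intro j _ hj
            exact if_neg fun hj' => hj (hKinj j i (hj'.nonempty_iso (hKi j) (hKi i) hi))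
          · simp
        · rw [Finset.sum_eq_zero fun i _ => if_neg fun hi => hex ⟨i, hi⟩, Finset.card_eq_zero,
            Finset.eq_empty_iff_forall_notMem]
          intro p hp
          obtain ⟨rfl, c₁, c₂, hd⟩ := mem_overlapPairs.1 hp
          obtain ⟨n, hn, L, hLc, hLi, hL⟩ := exists_connected_isCopyOf h₁ h₂ h₁c h₂c c₁ c₂ hd
          obtain ⟨i, ⟨e⟩⟩ := hKex n hn L hLc hLi
          exact hex ⟨i, hL.of_iso hLi (hKi i) e⟩
      rw [Finset.sum_congr rfl hfib, Finset.sum_comm]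
      refine Finset.sum_congr rfl fun i _ => ?_
      rw [← Finset.sum_filter, Finset.sum_const, smul_eq_mul, mul_comm]
      congr 2
      ext S
      simp [mem_copiesIn]
    · intro p hp
      simp only [Finset.coe_filter, Set.mem_ofPred_eq, Finset.mem_product, mem_copiesIn] at hp
      simpa using ⟨hp.1.1.1, hp.1.2.1⟩
end
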